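/- Let (x,t) be a social choice mechanism on an unrestricted parallel utility domain 𝒰 with |A| ≥ 3 that is DSIC, deterministic, onto, IR and satisfies no subsidy, and for distinct a,b ∈ A define L(a,b) := {α ∈ ℝ^n : there exists u ∈ 𝒰 with p_{i,a} − p_{i,b} = α_i for all i and x(u) = a}. Then for all α, β ∈ ℝ^n and all ε^{(α)}, ε^{(β)} ∈ ℝ^n with strictly positive entries: if α − ε^{(α)} ∈ L(a,b) and β − ε^{(β)} ∈ L(b,c) (for pairwise distinct a,b,c), then α + β − (ε^{(α)} + ε^{(β)})/2 ∈ L(a,c). -/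

import Mathlib

/-!
Common framework: agents indexed by `I`, alternatives `A` (finite, nonempty).
A type of an agent is a family `u : A → ℝ → ℝ`, where `u a z` is the utility
when alternative `a` is selected and the agent pays `z`.
-/

noncomputable section

namespace NQLSC

/-- A type (utility family) of an agent. -/
abbrev Util (A : Type*) := A → ℝ → ℝ

variable {A I : Type*}

/-- (S1): each `u a` is continuous and strictly decreasing in the payment. -/
def S1 (u : Util A) : Prop := ∀ a, Continuous (u a) ∧ StrictAnti (u a)

/-- `min_{a'∈A} u_{a'}(0)`, the value of the worst alternative at zero payment. -/
def minVal [Fintype A] [Nonempty A] (u : Util A) : ℝ :=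
  Finset.univ.inf' Finset.univ_nonempty (fun a => u a 0)

/-- (S2): as the payment tends to `+∞`, the utility of every alternative drops
(strictly) below `min_{a'} u_{a'}(0)`; for strictly decreasing utilities this is
equivalent to the utility being below that value at some payment. -/
def S2 [Fintype A] [Nonempty A] (u : Util A) : Prop :=
  ∀ a, ∃ z : ℝ, u a z < minVal u

/-- The willingness to pay `p_a = u_a⁻¹(min_{a'} u_{a'}(0))` (under (S1),(S2) this
`sInf` is the unique payment at which `u a` attains `minVal u`). -/
def wtp [Fintype A] [Nonempty A] (u : Util A) (a : A) : ℝ :=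
  sInf {z : ℝ | u a z ≤ minVal u}

/-- A parallel type: (S1), (S2), and for all `a, b` with `v_a ≥ v_b` and all
`z ∈ [0, p_b]`, `u_a (z + (p_a − p_b)) = u_b z`. -/
def IsParallel [Fintype A] [Nonempty A] (u : Util A) : Prop :=
  S1 u ∧ S2 u ∧ ∀ a b : A, u b 0 ≤ u a 0 → ∀ z : ℝ, 0 ≤ z → z ≤ wtp u b →
    u a (z + (wtp u a - wtp u b)) = u b z

/-- Unrestricted willingness to pay: every nonnegative vector with a zero entry is
the willingness-to-pay vector of some type in the domain. -/
def UnrestrictedWTP [Fintype A] [Nonempty A] (U : Set (Util A)) : Prop :=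
  ∀ lam : A → ℝ, (∀ a, 0 ≤ lam a) → (∃ a, lam a = 0) →
    ∃ u ∈ U, ∀ a, wtp u a = lam a

/-- Dominant-strategy incentive compatibility of a (deterministic) mechanism `(x,t)`
on the domain `𝒰 = ∏ i, U i`. -/
def DSIC [DecidableEq I] (U : I → Set (Util A)) (x : (I → Util A) → A)
    (t : (I → Util A) → I → ℝ) : Prop :=
  ∀ uh : I → Util A, (∀ j, uh j ∈ U j) → ∀ i, ∀ ui ∈ U i,
    ui (x uh) (t uh i) ≤
      ui (x (Function.update uh i ui)) (t (Function.update uh i ui) i)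

/-- Individual rationality. -/
def IR [Fintype A] [Nonempty A] [DecidableEq I] (U : I → Set (Util A))
    (x : (I → Util A) → A) (t : (I → Util A) → I → ℝ) : Prop :=
  ∀ uh : I → Util A, (∀ j, uh j ∈ U j) → ∀ i, ∀ ui ∈ U i,
    minVal ui ≤ ui (x (Function.update uh i ui)) (t (Function.update uh i ui) i)

/-- No subsidy: the mechanism never makes positive transfers to an agent. -/
def NoSubsidy (U : I → Set (Util A)) (t : (I → Util A) → I → ℝ) : Prop :=
  ∀ u : I → Util A, (∀ j, u j ∈ U j) → ∀ i, 0 ≤ t u i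

/-- Ontoness of the choice rule on the given domain. -/
def OntoMech (U : I → Set (Util A)) (x : (I → Util A) → A) : Prop :=
  ∀ a, ∃ u : I → Util A, (∀ j, u j ∈ U j) ∧ x u = a

/-- The set `L(a,b)` of vectors of willingness-to-pay differences `p_{·,a} − p_{·,b}`
realizable by a profile in the domain at which `a` is selected. -/
def Lset [Fintype A] [Nonempty A] (U : I → Set (Util A)) (x : (I → Util A) → A)
    (a b : A) : Set (I → ℝ) :=
  {α | ∃ u : I → Util A, (∀ j, u j ∈ U j) ∧
        (∀ i, wtp (u i) a - wtp (u i) b = α i) ∧ x u = a}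

theorem minVal_le [Fintype A] [Nonempty A] (u : Util A) (a : A) : minVal u ≤ u a 0 :=
  Finset.inf'_le (fun a => u a 0) (Finset.mem_univ a)

/-- The willingness to pay is the payment at which the utility equals `minVal`. -/
theorem apply_wtp [Fintype A] [Nonempty A] {u : Util A} (h1 : S1 u) (h2 : S2 u) (a : A) :
    u a (wtp u a) = minVal u := by
  obtain ⟨z, hz⟩ := h2 a
  obtain ⟨hc, hs⟩ := h1 a
  obtain ⟨y, hy⟩ : minVal u ∈ Set.range (u a) :=
    mem_range_of_exists_le_of_exists_ge hc ⟨z, hz.le⟩ ⟨0, minVal_le u a⟩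
  have hset : {z : ℝ | u a z ≤ minVal u} = Set.Ici y := by
    ext w
    rw [Set.mem_ofPred_eq, ← hy, hs.le_iff_ge, Set.mem_Ici]
  rw [wtp, hset, csInf_Ici, hy]

/-- For a parallel type, preferences over nonnegative payments whose preferred outcome is
individually rational are quasi-linear in the willingness to pay. -/
theorem IsParallel.wtp_sub_le [Fintype A] [Nonempty A] {u : Util A} (hu : IsParallel u)
    {c d : A} {s s' : ℝ} (hs : 0 ≤ s) (hs' : 0 ≤ s') (hir : minVal u ≤ u c s)
    (hle : u d s' ≤ u c s) : wtp u d - s' ≤ wtp u c - s := by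
  obtain ⟨h1, h2, h3⟩ := hu
  have hsc : s ≤ wtp u c := by
    rwa [← apply_wtp h1 h2 c, (h1 c).2.le_iff_ge] at hir
  rcases lt_or_ge (wtp u d) s' with hd | hd
  · linarith
  rcases le_total (u d 0) (u c 0) with h | h
  · rw [← h3 c d h s' hs' hd, (h1 c).2.le_iff_ge] at hle
    linarith
  · rw [← h3 d c h s hs hsc, (h1 d).2.le_iff_ge] at hle
    linarith

/-- Every vector is, up to an additive constant, the willingness to pay of some type. -/
theorem UnrestrictedWTP.exists_wtp_sub_eq [Fintype A] [Nonempty A] {V : Set (Util A)}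
    (hV : UnrestrictedWTP V) (d : A → ℝ) :
    ∃ u ∈ V, ∀ a b, wtp u a - wtp u b = d a - d b := by
  obtain ⟨m, hm⟩ := Finite.exists_min d
  obtain ⟨u, hu, hp⟩ := hV (fun a => d a - d m) (fun a => sub_nonneg.2 (hm a)) ⟨m, sub_self _⟩
  exact ⟨u, hu, fun a b => by rw [hp, hp]; ring⟩

theorem update_mem [DecidableEq I] {U : I → Set (Util A)} {u : I → Util A} (hu : ∀ j, u j ∈ U j) {i : I}
    {v : Util A} (hv : v ∈ U i) (j : I) : Function.update u i v j ∈ U j := by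
  rcases eq_or_ne j i with rfl | h
  · simpa using hv
  · simpa [h] using hu j

section Mechanism

variable [Fintype A] [Nonempty A] [DecidableEq I] {U : I → Set (Util A)}
  {x : (I → Util A) → A} {t : (I → Util A) → I → ℝ}

/-- Truthful reporting is optimal for the quasi-linear utilities `wtp - t`. -/
theorem wtp_sub_payment_le (hpar : ∀ i, ∀ u ∈ U i, IsParallel u) (hDSIC : DSIC U x t)
    (hIR : IR U x t) (hNS : NoSubsidy U t) {u : I → Util A} (hu : ∀ j, u j ∈ U j) {i : I}
    {v : Util A} (hv : v ∈ U i) :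
    wtp v (x u) - t u i ≤
      wtp v (x (Function.update u i v)) - t (Function.update u i v) i :=
  (hpar i v hv).wtp_sub_le (hNS _ (update_mem hu hv) i) (hNS u hu i) (hIR u hu i v hv)
    (hDSIC u hu i v hv)

/-- Weak monotonicity for a unilateral change of report. -/
theorem weak_monotone (hpar : ∀ i, ∀ u ∈ U i, IsParallel u) (hDSIC : DSIC U x t)
    (hIR : IR U x t) (hNS : NoSubsidy U t) {u : I → Util A} (hu : ∀ j, u j ∈ U j) {i : I}
    {v : Util A} (hv : v ∈ U i) :
    wtp v (x u) - wtp v (x (Function.update u i v)) ≤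
      wtp (u i) (x u) - wtp (u i) (x (Function.update u i v)) := by
  have h1 := wtp_sub_payment_le hpar hDSIC hIR hNS hu hv
  have h2 := wtp_sub_payment_le hpar hDSIC hIR hNS (update_mem hu hv) (hu i)
  rw [Function.update_idem, Function.update_eq_self] at h2
  linarith

/-- Positive association of differences: raising the willingness to pay for the selected
alternative relative to every other one, for every agent, does not change the selection. -/
theorem choice_eq_of_wtp_sub_lt [Fintype I] (hpar : ∀ i, ∀ u ∈ U i, IsParallel u)
    (hDSIC : DSIC U x t) (hIR : IR U x t) (hNS : NoSubsidy U t) {u v : I → Util A}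
    (hu : ∀ j, u j ∈ U j) (hv : ∀ j, v j ∈ U j) {a : A} (ha : x u = a)
    (h : ∀ i b, b ≠ a → wtp (u i) a - wtp (u i) b < wtp (v i) a - wtp (v i) b) :
    x v = a := by
  have key : ∀ s : Finset I, x (s.piecewise v u) = a := by
    intro s
    induction s using Finset.induction_on with
    | empty => simpa using ha
    | insert i s hi ih =>
      have hmem : ∀ j, s.piecewise v u j ∈ U j := fun j =>
        s.piecewise_cases v u (fun w => w ∈ U j) (hv j) (hu j)
      have hw := weak_monotone hpar hDSIC hIR hNS hmem (hv i)
      rw [ih, Finset.piecewise_eq_of_notMem s v u hi, ← Finset.piecewise_insert] at hw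
      by_contra hne
      exact absurd hw (not_le.2 (h i _ hne))
  simpa using key Finset.univ

/-- If `α ∈ L(a,b)`, then no vector strictly below `-α` lies in `L(b,a)`. -/
theorem notMem_Lset_of_add_neg [Fintype I] (hpar : ∀ i, ∀ u ∈ U i, IsParallel u)
    (hunr : ∀ i, UnrestrictedWTP (U i)) (hDSIC : DSIC U x t) (hIR : IR U x t)
    (hNS : NoSubsidy U t) {a b : A} (hab : a ≠ b) {α β : I → ℝ} (hα : α ∈ Lset U x a b)
    (hlt : ∀ i, α i + β i < 0) : β ∉ Lset U x b a := by
  classical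
  rintro ⟨v, hvU, hvd, hvx⟩
  obtain ⟨u, huU, hud, hux⟩ := hα
  -- `a` and `b` are raised far above all other alternatives, with difference between `α` and `-β`.
  let d : I → A → ℝ := fun i c =>
    if c = a then (α i - β i) / 2 else if c = b then 0 else
      min ((α i - β i) / 2 - (wtp (u i) a - wtp (u i) c)) (-(wtp (v i) b - wtp (v i) c)) - 1
  choose w hwU hw using fun i => (hunr i).exists_wtp_sub_eq (d i)
  have hxa : x w = a := by
    refine choice_eq_of_wtp_sub_lt hpar hDSIC hIR hNS huU hwU hux fun i c hc => ?_
    rw [hw]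
    by_cases hcb : c = b
    · subst hcb
      simp only [d, if_neg hc, if_true, hud]
      linarith [hlt i]
    · simp only [d, if_neg hc, if_neg hcb, if_true]
      linarith [min_le_left ((α i - β i) / 2 - (wtp (u i) a - wtp (u i) c))
        (-(wtp (v i) b - wtp (v i) c))]
  have hxb : x w = b := by
    refine choice_eq_of_wtp_sub_lt hpar hDSIC hIR hNS hvU hwU hvx fun i c hc => ?_
    rw [hw]
    by_cases hca : c = a
    · subst hca
      simp only [d, if_neg hab.symm, if_true, hvd]
      linarith [hlt i]
    · simp only [d, if_neg hc, if_neg hca, if_neg hab.symm, if_true]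
      linarith [min_le_right ((α i - β i) / 2 - (wtp (u i) a - wtp (u i) c))
        (-(wtp (v i) b - wtp (v i) c))]
  exact hab (hxa.symm.trans hxb)

end Mechanism

/-- "Transitivity" of the sets `L(a,b)` for a DSIC, deterministic,
onto, IR, no-subsidy mechanism on an unrestricted parallel utility domain, `|A| ≥ 3`. -/
theorem Lset_claim_three
    [Fintype A] [Nonempty A] [Fintype I] [DecidableEq I]
    (hA : 3 ≤ Fintype.card A)
    (U : I → Set (Util A))
    (hpar : ∀ i, ∀ u ∈ U i, IsParallel u)
    (hunr : ∀ i, UnrestrictedWTP (U i))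
    (x : (I → Util A) → A) (t : (I → Util A) → I → ℝ)
    (hDSIC : DSIC U x t) (hOnto : OntoMech U x)
    (hIR : IR U x t) (hNS : NoSubsidy U t) :
    ∀ a b c : A, a ≠ b → b ≠ c → a ≠ c →
    ∀ α β εα εβ : I → ℝ, (∀ i, 0 < εα i) → (∀ i, 0 < εβ i) →
      α - εα ∈ Lset U x a b → β - εβ ∈ Lset U x b c →
      (fun i => α i + β i - (εα i + εβ i) / 2) ∈ Lset U x a c := by
  classical
  intro a b c hab hbc hac α β εα εβ hεα hεβ hα hβ
  obtain ⟨u, huU, hux⟩ := hOnto a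
  let d : I → A → ℝ := fun i w =>
    if w = a then 0 else if w = b then -(α i - εα i / 2) else
      if w = c then -(α i + β i - (εα i + εβ i) / 2) else
        -(wtp (u i) a - wtp (u i) w + 1)
  choose v hvU hv using fun i => (hunr i).exists_wtp_sub_eq (d i)
  refine ⟨v, hvU, fun i => ?_, ?_⟩
  · rw [hv]
    simp [d, hac.symm, hbc.symm]
  -- The profile `v` witnesses membership in `L(w,y)` whenever `w` is selected.
  have hsel : ∀ {w y : A} {γ : I → ℝ}, y ≠ w → γ ∈ Lset U x y w →
      (∀ i, γ i < d i y - d i w) → x v ≠ w := by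
    intro w y γ hyw hγ hlt hxw
    refine notMem_Lset_of_add_neg hpar hunr hDSIC hIR hNS hyw hγ
      (β := fun i => d i w - d i y) (fun i => ?_) ⟨v, hvU, fun i => hv i w y, hxw⟩
    linarith [hlt i]
  have hb : x v ≠ b := hsel hab hα fun i => by
    simp only [d, if_neg hab.symm, if_true, Pi.sub_apply]
    linarith [hεα i]
  have hc : x v ≠ c := hsel hbc hβ fun i => by
    simp only [d, if_neg hab.symm, if_neg hac.symm, if_neg hbc.symm, if_true, Pi.sub_apply]
    linarith [hεβ i]
  by_contra ha
  refine hsel (w := x v) (Ne.symm ha) ⟨u, huU, fun i => rfl, hux⟩ (fun i => ?_) rfl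
  simp only [d, if_neg ha, if_neg hb, if_neg hc, if_true]
  linarith
end NQLSC
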